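/- Let Σ = {a,b}, let L ⊆ Σ* be a regular language, and let x_n denote the n-th word over {a,b} in shortlex order. Then the language N = {(n)_2 : n ≥ 0 and x_n ∉ L} of canonical base-2 representations of those indices n with x_n ∉ L is a regular language over the alphabet {0,1}. -/

import Mathlib

/-- `word n` is the `n`-th word over the two-letter alphabet `{a, b}` in shortlex
(dictionary) order, encoding `a` as `false` and `b` as `true`:
`word 0 = Λ`, `word (2n+1) = word n ++ [a]`, `word (2n+2) = word n ++ [b]`. -/
def word : ℕ → List Bool
  | 0 => []
  | n + 1 => word (n / 2) ++ [decide (n % 2 = 1)]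
decreasing_by exact Nat.lt_succ_of_le (Nat.div_le_self n 2)

/-- A language `L ⊆ Σ*` is regular if it is accepted by a deterministic finite
automaton, i.e. by a finite set of states with a transition function, an initial
state, and a set of accepting states. -/
def IsRegularLanguage {α : Type} (L : Set (List α)) : Prop :=
  ∃ (Q : Type) (_ : Fintype Q) (step : Q → α → Q) (start : Q) (accept : Set Q),
    L = {w | w.foldl step start ∈ accept}

/-- `rep n` is the canonical base-2 representation `(n)_2` of `n` as a word over
`{0, 1}` (encoded as `Bool`, `0 = false`, `1 = true`), most significant digit
first, with no leading zeros; `rep 0` is the empty word. -/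
def rep (n : ℕ) : List Bool := (Nat.bits n).reverse

lemma word_two_mul_add_one (n : ℕ) : word (2 * n + 1) = word n ++ [false] := by
  rw [word]
  congr 2
  · omega
  · simp

lemma word_two_mul_add_two (n : ℕ) : word (2 * n + 2) = word n ++ [true] := by
  rw [word]
  congr 2
  · omega
  · simp

lemma rep_bit {n : ℕ} {b : Bool} (h : n = 0 → b = true) :
    rep (Nat.bit b n) = rep n ++ [b] := by
  simp [rep, Nat.bits_append_bit n b h]

section IndexAutomaton

variable {Q : Type} (step : Q → Bool → Q) (start : Q)

/-- The transition function of an automaton reading `rep n`. State `none` means `n = 0`,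
`some none` is a dead state reached by a leading zero, and `some (some (p, q))` records that
`n` is positive and that `word n` and `word (n - 1)` lead from `start` to `p` and `q`. -/
def indexStep : Option (Option (Q × Q)) → Bool → Option (Option (Q × Q))
  | none, false => some none
  | none, true => some (some (step start false, start))
  | some none, _ => some none
  | some (some (_, q)), false => some (some (step q true, step q false))
  | some (some (p, q)), true => some (some (step p false, step q true))

/-- The state of the automaton `indexStep` after reading `rep n`. -/
def indexState : ℕ → Option (Option (Q × Q))
  | 0 => none
  | n + 1 => some (some ((word (n + 1)).foldl step start, (word n).foldl step start))

lemma indexStep_indexState {n : ℕ} {b : Bool} (h : n = 0 → b = true) :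
    indexStep step start (indexState step start n) b =
      indexState step start (Nat.bit b n) := by
  rcases n with _ | n
  · obtain rfl := h rfl
    simp [indexState, indexStep, Nat.bit, word]
  · cases b
    · have e : Nat.bit false (n + 1) = 2 * n + 1 + 1 := by simp [Nat.bit]; omega
      rw [e]
      simp [indexState, indexStep, word_two_mul_add_one, word_two_mul_add_two]
    · have e : Nat.bit true (n + 1) = 2 * n + 2 + 1 := by simp [Nat.bit]; omega
      have e' : word (2 * n + 2 + 1) = word (n + 1) ++ [false] :=
        word_two_mul_add_one (n + 1)
      rw [e]
      simp [indexState, indexStep, e', word_two_mul_add_two]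

lemma foldl_indexStep_rep (n : ℕ) :
    (rep n).foldl (indexStep step start) none = indexState step start n := by
  induction n using Nat.binaryRec' with
  | zero => simp [rep, indexState]
  | bit b n h ih =>
    rw [rep_bit h, List.foldl_append, ih]
    exact indexStep_indexState step start h

lemma foldl_indexStep_eq_dead_or_exists_rep (w : List Bool) :
    w.foldl (indexStep step start) none = some none ∨ ∃ n, w = rep n := by
  induction w using List.reverseRecOn with
  | nil => exact Or.inr ⟨0, by simp [rep]⟩
  | append_singleton w b ih =>
    rcases ih with h | ⟨n, rfl⟩
    · left
      simp [h, indexStep]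
    · by_cases h : n = 0 → b = true
      · exact Or.inr ⟨Nat.bit b n, (rep_bit h).symm⟩
      · left
        obtain ⟨rfl, hb⟩ := Classical.not_imp.mp h
        simp [rep, indexStep, hb]

end IndexAutomaton

/-- If `L ⊆ {a,b}*` is regular, then the language
`N = {(n)_2 : n ≥ 0, x_n ∉ L}` of canonical base-2 representations of the
indices `n` with `x_n ∉ L` is a regular language over `{0, 1}`. -/
theorem isRegularLanguage_rep_not_mem (L : Set (List Bool)) (hL : IsRegularLanguage L) :
    IsRegularLanguage {w : List Bool | ∃ n : ℕ, w = rep n ∧ word n ∉ L} := by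
  obtain ⟨Q, _, step, start, accept, rfl⟩ := hL
  let indexAccept : Set (Option (Option (Q × Q))) := fun s =>
    match s with
    | none => start ∉ accept
    | some none => False
    | some (some (p, _)) => p ∉ accept
  have mem_indexAccept (n : ℕ) : indexState step start n ∈ indexAccept ↔
      (word n).foldl step start ∉ accept := by
    cases n
    · rw [word]; rfl
    · rfl
  refine ⟨_, inferInstance, indexStep step start, none, indexAccept, ?_⟩
  ext w
  constructor
  · rintro ⟨n, rfl, hn⟩
    rw [Set.mem_ofPred_eq, foldl_indexStep_rep]
    exact (mem_indexAccept n).mpr hn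
  · intro hw
    rcases foldl_indexStep_eq_dead_or_exists_rep step start w with h | ⟨n, rfl⟩
    · rw [Set.mem_ofPred_eq, h] at hw
      exact hw.elim
    · rw [Set.mem_ofPred_eq, foldl_indexStep_rep] at hw
      exact ⟨n, rfl, (mem_indexAccept n).mp hw⟩
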